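/- Let N be a lattice of rank d and let U ⊆ N_ℝ be a convex set of the form U = conv(F) + σ₀, where F ⊆ N_ℝ is a finite set and σ₀ is the convex cone generated by finitely many elements of N. Let l = d − dim(σ₀ − σ₀) and suppose l ≥ 1. Let t > 0 and suppose N ∩ int(tU) = ∅. Then there exists a surjective ℤ-linear map φ : N → ℤ such that φ_ℝ(U) ⊆ ℝ is a bounded interval of length at most l²/t. -/

import Mathlib

open Pointwise

/-- The lattice `ℤ^d` viewed inside its realification `ℝ^d`
(a model of an arbitrary lattice of rank `d`). -/
def intPts (d : ℕ) : Set (Fin d → ℝ) := {x | ∀ i, ∃ n : ℤ, x i = (n : ℝ)}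

/-- The convex cone generated by a set `s`: all finite nonnegative linear
combinations of elements of `s`. -/
def coneHull {V : Type*} [AddCommGroup V] [Module ℝ V] (s : Set V) : Set V :=
  {x | ∃ (n : ℕ) (c : Fin n → ℝ) (v : Fin n → V),
    (∀ i, 0 ≤ c i) ∧ (∀ i, v i ∈ s) ∧ x = ∑ i, c i • v i}

section PoissonSummation

open MeasureTheory Filter Topology

variable {ι : Type*} [Fintype ι]

lemma mFourier_coe_apply (y : ι → ℤ) (u : ι → ℝ) :
    UnitAddTorus.mFourier y (fun i => (u i : UnitAddCircle)) =
      Complex.exp (2 * Real.pi * Complex.I * ∑ i, (y i : ℂ) * (u i : ℂ)) := by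
  simp only [UnitAddTorus.mFourier, ContinuousMap.coe_mk, fourier_coe_apply, Finset.mul_sum,
    Complex.exp_sum]
  refine Finset.prod_congr rfl fun i _ => ?_
  congr 1
  push_cast
  ring

/-- The half-open unit boxes with integral corners tile `ℝ^ι`, so an integral over the whole space
is the sum of the integrals over one box of all integral translates. -/
lemma hasSum_integral_unitBox_intCast {f : (ι → ℝ) → ℂ} (hf : Integrable f) :
    HasSum (fun x : ι → ℤ => ∫ v in {v : ι → ℝ | ∀ i, v i ∈ Set.Ioc (0 : ℝ) (0 + 1)},
      f ((fun i => (x i : ℝ)) + v)) (∫ v, f v) := by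
  let box : (ι → ℤ) → Set (ι → ℝ) := fun x => {v | ∀ i, v i - x i ∈ Set.Ioc (0 : ℝ) (0 + 1)}
  have hmeas : ∀ x, MeasurableSet (box x) := by
    intro x
    have : box x = ⋂ i, (fun v : ι → ℝ => v i - x i) ⁻¹' Set.Ioc (0 : ℝ) (0 + 1) := by
      ext v; simp [box]
    rw [this]
    exact MeasurableSet.iInter fun i => measurableSet_Ioc.preimage (by fun_prop)
  have hdisj : Pairwise (Function.onFun Disjoint box) := by
    intro x y hxy
    refine Set.disjoint_left.2 fun v hx hy => hxy (funext fun i => ?_)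
    have h1 := hx i
    have h2 := hy i
    simp only [Set.mem_Ioc] at h1 h2
    have h3 : (x i : ℝ) < y i + 1 := by linarith
    have h4 : (y i : ℝ) < x i + 1 := by linarith
    norm_cast at h3 h4
    omega
  have hunion : (⋃ x, box x) = Set.univ := by
    refine Set.eq_univ_of_forall fun v => Set.mem_iUnion.2 ⟨fun i => ⌈v i⌉ - 1, fun i => ?_⟩
    have h1 := Int.ceil_lt_add_one (v i)
    have h2 := Int.le_ceil (v i)
    push_cast
    constructor <;> linarith
  have key := hasSum_integral_iUnion hmeas hdisj (f := f) (μ := volume) hf.integrableOn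
  rw [hunion, Measure.restrict_univ] at key
  refine Eq.mp (congrArg (HasSum · _) (funext fun x => ?_)) key
  have := (measurePreserving_add_left (volume : Measure (ι → ℝ))
    (fun i => (x i : ℝ))).setIntegral_preimage_emb
    (MeasurableEquiv.addLeft (fun i => (x i : ℝ))).measurableEmbedding f (box x)
  rw [← this]
  have hbox : (fun v : ι → ℝ => (fun i => (x i : ℝ)) + v) ⁻¹' box x =
      {v : ι → ℝ | ∀ i, v i ∈ Set.Ioc (0 : ℝ) (0 + 1)} := by
    ext v
    simp only [box, Set.mem_preimage, Set.mem_ofPred_eq, Pi.add_apply, add_sub_cancel_left]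
  rw [hbox]

/-- **Poisson summation** on `ℤ^ι`, pointwise form. -/
theorem hasSum_poisson {g : (ι → ℝ) → ℂ} (hg : Continuous g) (hint : Integrable g)
    (hloc : ∀ R : ℝ, ∃ b : (ι → ℤ) → ℝ, Summable b ∧
      ∀ x, ∀ u : ι → ℝ, ‖u‖ ≤ R → ‖g ((fun i => (x i : ℝ)) + u)‖ ≤ b x)
    {c : (ι → ℤ) → ℂ}
    (hc : ∀ y, c y = ∫ v, Complex.exp (-(2 * Real.pi * Complex.I * ∑ i, (y i : ℂ) * (v i : ℂ)))
      * g v)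
    (hcs : Summable c) (u : ι → ℝ) :
    HasSum (fun y : ι → ℤ =>
      c y * Complex.exp (2 * Real.pi * Complex.I * ∑ i, (y i : ℂ) * (u i : ℂ)))
      (∑' x : ι → ℤ, g ((fun i => (x i : ℝ)) + u)) := by
  let f : (ι → ℝ) → ℂ := fun u => ∑' x : ι → ℤ, g ((fun i => (x i : ℝ)) + u)
  have hfcont : Continuous f := by
    rw [continuous_iff_continuousAt]
    intro u
    obtain ⟨b, hb, hbd⟩ := hloc (‖u‖ + 1)
    have : ContinuousOn f (Metric.ball 0 (‖u‖ + 1)) := by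
      refine continuousOn_tsum (fun x => ?_) hb fun x v hv => hbd x v ?_
      · exact (hg.comp (by fun_prop)).continuousOn
      · exact (mem_ball_zero_iff.1 hv).le
    exact this.continuousAt (Metric.isOpen_ball.mem_nhds (by simp))
  have hfper : ∀ (z : ι → ℤ) (u : ι → ℝ), f ((fun i => (z i : ℝ)) + u) = f u := by
    intro z u
    refine Eq.trans ?_ ((Equiv.addRight z).tsum_eq fun x : ι → ℤ => g ((fun i => (x i : ℝ)) + u))
    refine tsum_congr fun x => congrArg g ?_
    ext i
    simp [add_assoc]
  let q : (ι → ℝ) → UnitAddTorus ι := fun u i => (u i : UnitAddCircle)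
  have hq : IsOpenQuotientMap q :=
    IsOpenQuotientMap.piMap (f := fun (_ : ι) (r : ℝ) => (r : UnitAddCircle))
      fun _ => QuotientAddGroup.isOpenQuotientMap_mk
  have hfact : ∀ u v, q u = q v → f u = f v := by
    intro u v h
    have h' : ∀ i, ∃ n : ℤ, u i = n + v i := by
      intro i
      have h1 : (u i : UnitAddCircle) = v i := congrFun h i
      rw [← sub_eq_zero, ← AddCircle.coe_sub, AddCircle.coe_eq_zero_iff] at h1
      obtain ⟨n, hn⟩ := h1
      exact ⟨n, by simp at hn; linarith⟩
    choose n hn using h'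
    rw [← hfper n v]
    congr 1
    ext i
    exact hn i
  let qc : C(ι → ℝ, UnitAddTorus ι) := ⟨q, hq.continuous⟩
  have hqc : IsQuotientMap qc := hq.isQuotientMap
  let F : C(UnitAddTorus ι, ℂ) := hqc.lift ⟨f, hfcont⟩ fun u v h => hfact u v h
  have hF : ∀ u, F (q u) = f u := fun u => by
    exact DFunLike.congr_fun (hqc.lift_comp ⟨f, hfcont⟩ fun u v h => hfact u v h) u
  have hcoeff : ∀ y, UnitAddTorus.mFourierCoeff F y = c y := by
    intro y
    rw [UnitAddTorus.mFourierCoeff_eq_integral F y 0, hc y]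
    have hI : Integrable fun v : ι → ℝ =>
        Complex.exp (-(2 * Real.pi * Complex.I * ∑ i, (y i : ℂ) * (v i : ℂ))) * g v := by
      refine hint.bdd_mul (c := 1) (Continuous.aestronglyMeasurable (by fun_prop)) (Eventually.of_forall fun v => ?_)
      rw [Complex.norm_exp]
      simp
    have h1 := hasSum_integral_unitBox_intCast hI
    refine HasSum.unique ?_ h1
    obtain ⟨b, hb, hbd⟩ := hloc 1
    have hmem : MeasurableSet {v : ι → ℝ | ∀ i, v i ∈ Set.Ioc (0 : ℝ) (0 + 1)} := by
      rw [show {v : ι → ℝ | ∀ i, v i ∈ Set.Ioc (0 : ℝ) (0 + 1)} =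
        Set.univ.pi fun _ => Set.Ioc (0 : ℝ) (0 + 1) by ext; simp]
      exact MeasurableSet.univ_pi fun _ => measurableSet_Ioc
    have hfin : volume {v : ι → ℝ | ∀ i, v i ∈ Set.Ioc (0 : ℝ) (0 + 1)} ≠ ⊤ := by
      refine ((Metric.isBounded_closedBall (x := (0 : ι → ℝ)) (r := 1)).subset ?_).measure_lt_top.ne
      intro v hv
      rw [mem_closedBall_zero_iff, pi_norm_le_iff_of_nonneg zero_le_one]
      intro i
      have := hv i
      rw [Set.mem_Ioc] at this
      rw [Real.norm_eq_abs, abs_le]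
      constructor <;> linarith
    have hexp : ∀ (x : ι → ℤ) (v : ι → ℝ),
        Complex.exp (-(2 * Real.pi * Complex.I *
          ∑ i, (y i : ℂ) * (((fun i => (x i : ℝ)) + v) i : ℝ))) =
        UnitAddTorus.mFourier (-y) (fun i => (v i : UnitAddCircle)) := by
      intro x v
      rw [mFourier_coe_apply, Complex.exp_eq_exp_iff_exists_int]
      refine ⟨-∑ i, y i * x i, ?_⟩
      simp only [Pi.add_apply, Pi.neg_apply]
      push_cast
      simp only [mul_add, neg_mul, Finset.sum_add_distrib, Finset.sum_neg_distrib]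
      ring
    refine hasSum_integral_of_dominated_convergence (fun x _ => b x) (fun x => ?_) (fun x => ?_)
      (Eventually.of_forall fun _ => hb) ?_ (Eventually.of_forall fun v => ?_)
    · exact Continuous.aestronglyMeasurable (by fun_prop)
    · refine (ae_restrict_iff' hmem).2 (Eventually.of_forall fun v hv => ?_)
      rw [norm_mul, Complex.norm_exp]
      refine le_trans (le_of_eq ?_) (hbd x v ?_)
      · simp
      · rw [pi_norm_le_iff_of_nonneg zero_le_one]
        intro i
        have := hv i
        rw [Set.mem_Ioc] at this
        rw [Real.norm_eq_abs, abs_le]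
        constructor <;> linarith
    · exact integrableOn_const hfin
    · simp only [hexp, smul_eq_mul]
      refine HasSum.mul_left _ ?_
      have : F (fun i => (v i : UnitAddCircle)) = f v := hF v
      rw [this]
      obtain ⟨b, hb, hbd⟩ := hloc ‖v‖
      exact (Summable.of_norm_bounded hb fun x => hbd x v le_rfl).hasSum
  have key := UnitAddTorus.hasSum_mFourier_series_apply_of_summable (f := F)
    (by rw [funext hcoeff]; exact hcs) (q u)
  simp only [hF, hcoeff, smul_eq_mul] at key
  simp only [q, mFourier_coe_apply] at key
  exact key

end PoissonSummation

section GaussianSums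

open MeasureTheory Filter Topology
open scoped InnerProductSpace

variable {ι : Type*}

/-- The integral vectors of `ℝ^ι`, with its Euclidean structure. -/
def intVec (x : ι → ℤ) : EuclideanSpace ℝ ι := WithLp.toLp 2 fun i => (x i : ℝ)

lemma intVec_inj {x y : ι → ℤ} (h : intVec x = intVec y) : x = y := by
  ext i
  have := congrArg (fun v : EuclideanSpace ℝ ι => v i) h
  simpa [intVec] using this

@[simp] lemma intVec_zero : intVec (0 : ι → ℤ) = 0 := by
  ext i; simp [intVec]

variable [Fintype ι]

lemma inner_intVec (y : ι → ℤ) (v : EuclideanSpace ℝ ι) :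
    ⟪intVec y, v⟫_ℝ = ∑ i, (y i : ℝ) * v i := by
  simp [PiLp.inner_apply, intVec, mul_comm]

lemma summable_exp_neg_mul_norm_intVec_sq {c : ℝ} (hc : 0 < c) :
    Summable fun x : ι → ℤ => Real.exp (-c * ‖intVec x‖ ^ 2) := by
  let b := (EuclideanSpace.basisFun ι ℝ).toBasis
  let L : Submodule ℤ (EuclideanSpace ℝ ι) := Submodule.span ℤ (Set.range b)
  have hmem : ∀ x : ι → ℤ, intVec x ∈ L := by
    intro x
    have : intVec x = ∑ i, x i • b i := by
      classical
      ext j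
      simp [intVec, b, Finset.sum_apply, Pi.single_apply]
    rw [this]
    exact Submodule.sum_mem _ fun i _ => Submodule.smul_mem _ _ (Submodule.subset_span ⟨i, rfl⟩)
  let k := Module.finrank ℤ L + 1
  have h1 := ZLattice.summable_norm_pow_inv L k (Nat.lt_succ_self _)
  have hinj : Function.Injective fun x : ι → ℤ => (⟨intVec x, hmem x⟩ : L) := fun x y h =>
    intVec_inj (congrArg Subtype.val h)
  have h2 := h1.comp_injective hinj
  have hb : (fun r : ℝ => Real.exp (-c * r ^ 2)) =o[atTop] fun r : ℝ => r ^ (-(k : ℝ)) := by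
    simpa using rexp_neg_quadratic_isLittleO_rpow_atTop (neg_lt_zero.2 hc) 0 (-(k : ℝ))
  obtain ⟨R, hR⟩ := (eventually_atTop.1 (hb.bound one_pos))
  refine Summable.of_norm_bounded_eventually h2 ?_
  have hfin : {x : ι → ℤ | ‖intVec x‖ ≤ max R 1}.Finite := by
    have hb : Bornology.IsBounded (Metric.closedBall (0 : EuclideanSpace ℝ ι) (max R 1)) :=
      Metric.isBounded_closedBall
    have := ZSpan.setFinite_inter b hb
    refine (this.preimage (f := intVec) fun x _ y _ h => intVec_inj h).subset fun x hx => ?_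
    exact ⟨mem_closedBall_zero_iff.2 hx, hmem x⟩
  refine hfin.subset fun x hx => ?_
  by_contra hlt
  simp only [Set.mem_ofPred_eq, not_le, max_lt_iff] at hlt
  refine hx ?_
  have := hR _ hlt.1.le
  rw [one_mul, Real.norm_of_nonneg (by positivity : (0 : ℝ) ≤ ‖intVec x‖ ^ (-(k : ℝ))),
    Real.rpow_neg (norm_nonneg _), Real.rpow_natCast] at this
  simpa using this

lemma ContinuousLinearEquiv.exists_pos_mul_norm_le {E : Type*} [NormedAddCommGroup E]
    [NormedSpace ℝ E] (B : E ≃L[ℝ] E) : ∃ β : ℝ, 0 < β ∧ ∀ v, β * ‖v‖ ≤ ‖B v‖ := by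
  refine ⟨(‖(B.symm : E →L[ℝ] E)‖ + 1)⁻¹, by positivity, fun v => ?_⟩
  rw [inv_mul_le_iff₀ (by positivity)]
  calc ‖v‖ = ‖(B.symm : E →L[ℝ] E) (B v)‖ := by simp
    _ ≤ ‖(B.symm : E →L[ℝ] E)‖ * ‖B v‖ := ContinuousLinearMap.le_opNorm _ _
    _ ≤ _ := by gcongr; linarith

lemma exists_summable_bound_gaussian (B : EuclideanSpace ℝ ι ≃L[ℝ] EuclideanSpace ℝ ι)
    {c : ℝ} (hc : 0 < c) (R : ℝ) :
    ∃ b : (ι → ℤ) → ℝ, Summable b ∧ ∀ x, ∀ u : EuclideanSpace ℝ ι, ‖u‖ ≤ R →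
      Real.exp (-c * ‖B (intVec x + u)‖ ^ 2) ≤ b x := by
  obtain ⟨β, hβ, hB⟩ := B.exists_pos_mul_norm_le
  refine ⟨fun x => Real.exp (c * β ^ 2 * R ^ 2) * Real.exp (-(c * β ^ 2 / 2) * ‖intVec x‖ ^ 2),
    (summable_exp_neg_mul_norm_intVec_sq (by positivity)).mul_left _, fun x u hu => ?_⟩
  simp only [← Real.exp_add, Real.exp_le_exp]
  have h1 : ‖intVec x‖ ≤ ‖intVec x + u‖ + ‖u‖ := by
    simpa using norm_sub_le (intVec x + u) u
  have h2 : ‖intVec x‖ ^ 2 ≤ 2 * ‖intVec x + u‖ ^ 2 + 2 * R ^ 2 := by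
    nlinarith [norm_nonneg (intVec x), norm_nonneg u, norm_nonneg (intVec x + u),
      sq_nonneg (‖intVec x + u‖ - ‖u‖)]
  have h3 : β ^ 2 * ‖intVec x + u‖ ^ 2 ≤ ‖B (intVec x + u)‖ ^ 2 := by
    rw [← mul_pow]
    gcongr
    exact hB _
  have h4 := mul_le_mul_of_nonneg_left h3 hc.le
  have h5 := mul_le_mul_of_nonneg_left h2 (by positivity : 0 ≤ c * β ^ 2 / 2)
  nlinarith

lemma summable_gaussian (B : EuclideanSpace ℝ ι ≃L[ℝ] EuclideanSpace ℝ ι) {c : ℝ} (hc : 0 < c)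
    (u : EuclideanSpace ℝ ι) :
    Summable fun x : ι → ℤ => Real.exp (-c * ‖B (intVec x + u)‖ ^ 2) := by
  obtain ⟨b, hb, hbd⟩ := exists_summable_bound_gaussian B hc ‖u‖
  exact hb.of_nonneg_of_le (fun _ => (Real.exp_pos _).le) fun x => hbd x u le_rfl

lemma map_symm_volume {E : Type*} [NormedAddCommGroup E] [NormedSpace ℝ E]
    [FiniteDimensional ℝ E] [MeasurableSpace E] [BorelSpace E] (μ : Measure E)
    [μ.IsAddHaarMeasure] (A : E ≃L[ℝ] E) :
    μ.map A.symm = ENNReal.ofReal |LinearMap.det (A : E →ₗ[ℝ] E)| • μ := by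
  have hdet := LinearEquiv.det_mul_det_symm A.toLinearEquiv
  have hdet' : LinearMap.det (A.symm : E →ₗ[ℝ] E) ≠ 0 :=
    (LinearEquiv.isUnit_det' A.symm.toLinearEquiv).ne_zero
  have h := Measure.map_linearMap_addHaar_eq_smul_addHaar μ hdet'
  rw [show (LinearMap.det (A.symm : E →ₗ[ℝ] E))⁻¹ = LinearMap.det (A : E →ₗ[ℝ] E) from
    inv_eq_of_mul_eq_one_left hdet] at h
  exact h

/-- **Poisson summation for Gaussians**: the Gaussian sum over a translated lattice in terms of the
dual lattice. The constant is the covolume. -/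
theorem exists_hasSum_poisson_gaussian (A : EuclideanSpace ℝ ι ≃L[ℝ] EuclideanSpace ℝ ι) :
    ∃ κ : ℝ, 0 < κ ∧ ∀ s : ℝ, 0 < s → ∀ u : EuclideanSpace ℝ ι,
      HasSum (fun y : ι → ℤ => κ * (1 / s) ^ (Fintype.card ι / 2 : ℝ) *
        (Real.exp (-(Real.pi / s) * ‖A.toContinuousLinearMap.adjoint (intVec y)‖ ^ 2) *
          Real.cos (2 * Real.pi * ⟪intVec y, u⟫_ℝ)))
        (∑' x : ι → ℤ, Real.exp (-(Real.pi * s) * ‖A.symm (intVec x + u)‖ ^ 2)) := by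
  let T : EuclideanSpace ℝ ι →L[ℝ] EuclideanSpace ℝ ι := A.toContinuousLinearMap.adjoint
  have hTinj : Function.Injective T := by
    intro v w h
    refine ext_inner_right ℝ fun z => ?_
    have : ⟪T v, A.symm z⟫_ℝ = ⟪T w, A.symm z⟫_ℝ := by rw [h]
    simpa [T, ContinuousLinearMap.adjoint_inner_left] using this
  let Te : EuclideanSpace ℝ ι ≃L[ℝ] EuclideanSpace ℝ ι := (LinearEquiv.ofInjectiveEndo T.toLinearMap hTinj).toContinuousLinearEquiv
  have hTe : ∀ v, Te v = T v := fun v => rfl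
  have hdet : LinearMap.det (A : EuclideanSpace ℝ ι →ₗ[ℝ] EuclideanSpace ℝ ι) ≠ 0 := (LinearEquiv.isUnit_det' A.toLinearEquiv).ne_zero
  refine ⟨|LinearMap.det (A : EuclideanSpace ℝ ι →ₗ[ℝ] EuclideanSpace ℝ ι)|, abs_pos.2 hdet, fun s hs u => ?_⟩
  have hps : 0 < Real.pi * s := by positivity
  let g : (ι → ℝ) → ℂ := fun v =>
    ((Real.exp (-(Real.pi * s) * ‖A.symm (WithLp.toLp 2 v : EuclideanSpace ℝ ι)‖ ^ 2) : ℝ) : ℂ)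
  have htl : Continuous fun v : ι → ℝ => (WithLp.toLp 2 v : EuclideanSpace ℝ ι) := by fun_prop
  have hg : Continuous g := by
    refine Complex.continuous_ofReal.comp (Real.continuous_exp.comp ?_)
    exact continuous_const.mul (((A.symm.continuous.comp htl).norm).pow 2)
  have hkey : ∀ y : ι → ℤ,
      (∫ v, Complex.exp (-(2 * Real.pi * Complex.I * ∑ i, (y i : ℂ) * (v i : ℂ))) * g v) =
      (((|LinearMap.det (A : EuclideanSpace ℝ ι →ₗ[ℝ] EuclideanSpace ℝ ι)| * (1 / s) ^ (Fintype.card ι / 2 : ℝ) *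
        Real.exp (-(Real.pi / s) * ‖T (intVec y)‖ ^ 2) : ℝ)) : ℂ) := by
    intro y
    let w : EuclideanSpace ℝ ι := T (intVec y)
    let h : EuclideanSpace ℝ ι → ℂ := fun v => Complex.exp (-((Real.pi * s : ℝ) : ℂ) * ‖v‖ ^ 2 +
      (-(2 * Real.pi * Complex.I)) * ⟪w, v⟫_ℝ)
    have e1 : ∀ v : ι → ℝ,
        Complex.exp (-(2 * Real.pi * Complex.I * ∑ i, (y i : ℂ) * (v i : ℂ))) * g v =
          h (A.symm (WithLp.toLp 2 v : EuclideanSpace ℝ ι)) := by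
      intro v
      have : ⟪w, A.symm (WithLp.toLp 2 v : EuclideanSpace ℝ ι)⟫_ℝ = ∑ i, (y i : ℝ) * v i := by
        simp [w, T, ContinuousLinearMap.adjoint_inner_left, inner_intVec]
      simp only [g, h, this, Complex.ofReal_exp, ← Complex.exp_add]
      congr 1
      push_cast
      ring
    simp_rw [e1]
    have e3 : ∫ v : EuclideanSpace ℝ ι, h (A.symm v) =
        ∫ v, h v ∂(Measure.map A.symm volume) :=
      (A.symm.toHomeomorph.measurableEmbedding.integral_map h).symm
    rw [(PiLp.volume_preserving_toLp ι).integral_comp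
      (MeasurableEquiv.toLp 2 _).measurableEmbedding (fun v : EuclideanSpace ℝ ι => h (A.symm v)),
      e3, map_symm_volume, integral_smul_measure, GaussianFourier.integral_cexp_neg_mul_sq_norm_add (by simpa using hps),
      ENNReal.toReal_ofReal (abs_nonneg _)]
    have e2 : (Real.pi : ℂ) / ((Real.pi * s : ℝ) : ℂ) = ((1 / s : ℝ) : ℂ) := by
      push_cast
      have := Real.pi_ne_zero
      field_simp
    have e4 : (((1 / s) ^ (Fintype.card ι / 2 : ℝ) : ℝ) : ℂ) =
        ((1 / s : ℝ) : ℂ) ^ (Fintype.card ι / 2 : ℂ) := by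
      rw [Complex.ofReal_cpow (by positivity)]
      push_cast
      rfl
    rw [e2, finrank_euclideanSpace, Complex.real_smul, Complex.ofReal_mul (_ * _),
      Complex.ofReal_mul |_|, e4, Complex.ofReal_exp]
    have hpi : (Real.pi : ℂ) ≠ 0 := by exact_mod_cast Real.pi_ne_zero
    have hs' : (s : ℂ) ≠ 0 := by exact_mod_cast hs.ne'
    have e5 : (-(2 * Real.pi * Complex.I)) ^ 2 * (‖w‖ : ℂ) ^ 2 / (4 * ((Real.pi * s : ℝ) : ℂ)) =
        ((-(Real.pi / s) * ‖T (intVec y)‖ ^ 2 : ℝ) : ℂ) := by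
      push_cast
      simp only [neg_sq, mul_pow, Complex.I_sq, w]
      field_simp
      ring
    rw [e5]
    ring
  have hint : Integrable g := by
    have h0 := GaussianFourier.integrable_cexp_neg_mul_sq_norm_add (V := EuclideanSpace ℝ ι) (b := ((Real.pi * s : ℝ) : ℂ))
      (by simpa using hps) 0 0
    have h1 : Integrable (fun v : EuclideanSpace ℝ ι => Complex.exp (-((Real.pi * s : ℝ) : ℂ) * ‖v‖ ^ 2
        + 0 * ⟪(0 : EuclideanSpace ℝ ι), v⟫_ℝ)) (Measure.map A.symm volume) := by
      rw [map_symm_volume]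
      exact h0.smul_measure ENNReal.ofReal_ne_top
    have h2 := (A.symm.toHomeomorph.measurableEmbedding.integrable_map_iff).1 h1
    have h3 := ((PiLp.volume_preserving_toLp ι).integrable_comp_emb
      (MeasurableEquiv.toLp 2 _).measurableEmbedding).2 h2
    refine h3.congr (Eventually.of_forall fun v => ?_)
    simp [g]
  have hloc : ∀ R : ℝ, ∃ b : (ι → ℤ) → ℝ, Summable b ∧
      ∀ x, ∀ u : ι → ℝ, ‖u‖ ≤ R → ‖g ((fun i => (x i : ℝ)) + u)‖ ≤ b x := by
    intro R
    let L := ((EuclideanSpace.equiv ι ℝ).symm : (ι → ℝ) →L[ℝ] EuclideanSpace ℝ ι)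
    obtain ⟨b, hb, hbd⟩ := exists_summable_bound_gaussian A.symm hps (‖L‖ * R)
    refine ⟨b, hb, fun x u hu => ?_⟩
    have h1 : ‖(WithLp.toLp 2 u : EuclideanSpace ℝ ι)‖ ≤ ‖L‖ * R :=
      (L.le_opNorm u).trans (mul_le_mul_of_nonneg_left hu (norm_nonneg L))
    have h2 := hbd x _ h1
    rw [Complex.norm_real, Real.norm_of_nonneg (Real.exp_pos _).le]
    exact h2
  have hcs : Summable fun y : ι → ℤ =>
      (((|LinearMap.det (A : EuclideanSpace ℝ ι →ₗ[ℝ] EuclideanSpace ℝ ι)| * (1 / s) ^ (Fintype.card ι / 2 : ℝ) *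
        Real.exp (-(Real.pi / s) * ‖T (intVec y)‖ ^ 2) : ℝ)) : ℂ) := by
    rw [Complex.summable_ofReal]
    refine Summable.mul_left _ ?_
    simpa [hTe] using summable_gaussian Te (by positivity : 0 < Real.pi / s) 0
  have key := hasSum_poisson hg hint hloc (fun y => (hkey y).symm) hcs u.ofLp
  have key2 := Complex.hasSum_re key
  refine (Eq.mp (congrArg₂ HasSum (funext fun y => ?_) ?_) key2)
  · have : ∑ i, (y i : ℂ) * ((u.ofLp i : ℝ) : ℂ) = ((⟪intVec y, u⟫_ℝ : ℝ) : ℂ) := by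
      simp [inner_intVec]
    rw [this, Complex.re_ofReal_mul, ← mul_assoc]
    congr 1
    rw [show 2 * (Real.pi : ℂ) * Complex.I * ((⟪intVec y, u⟫_ℝ : ℝ) : ℂ) =
      ((2 * Real.pi * ⟪intVec y, u⟫_ℝ : ℝ) : ℂ) * Complex.I by push_cast; ring,
      Complex.exp_ofReal_mul_I_re]
  · rw [← Complex.ofReal_tsum, Complex.ofReal_re]
    rfl

end GaussianSums

section Transference

open Filter Topology
open scoped InnerProductSpace

variable {ι : Type*} [Fintype ι]

lemma exp_neg_pi_mul_seven_sixteenths : Real.exp (-(Real.pi * (7 / 16))) * (12 / 5) ≤ 0.62 := by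
  have h1 : (3.91 : ℝ) / 1.01 ≤ Real.exp (Real.pi * (7 / 16)) := by
    have h2 := Real.quadratic_le_exp_of_nonneg (show (0 : ℝ) ≤ 0.37 by norm_num)
    have h3 : Real.exp (1 + 0.37) ≤ Real.exp (Real.pi * (7 / 16)) := by
      rw [Real.exp_le_exp]
      linarith [Real.pi_gt_d2]
    rw [Real.exp_add] at h3
    have h4 := Real.exp_one_gt_d9
    nlinarith
  rw [Real.exp_neg, inv_mul_le_iff₀ (Real.exp_pos _)]
  linarith

lemma exp_neg_pi_mul_four : Real.exp (-Real.pi) * 4 ≤ 0.185 := by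
  have h1 : (21.7 : ℝ) ≤ Real.exp Real.pi := by
    have h2 := Real.quadratic_le_exp_of_nonneg (show (0 : ℝ) ≤ 0.14 by norm_num)
    have h3 : Real.exp (1 + 1 + 1 + 0.14) ≤ Real.exp Real.pi := by
      rw [Real.exp_le_exp]
      linarith [Real.pi_gt_d2]
    rw [Real.exp_add, Real.exp_add, Real.exp_add] at h3
    have h4 := Real.exp_one_gt_d9
    have h5 : (7.38 : ℝ) ≤ Real.exp 1 * Real.exp 1 := by nlinarith
    have h6 : (20 : ℝ) ≤ Real.exp 1 * Real.exp 1 * Real.exp 1 := by nlinarith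
    nlinarith
  rw [Real.exp_neg, inv_mul_le_iff₀ (Real.exp_pos _)]
  linarith

/-- If all nonzero dual lattice vectors are longer than `n / 2`, then the covering radius is
less than one, in dimension `n ≥ 2`. -/
theorem exists_norm_symm_sub_lt_one_of_two_le
    (A : EuclideanSpace ℝ ι ≃L[ℝ] EuclideanSpace ℝ ι) (hι : 2 ≤ Fintype.card ι)
    (hA : ∀ y : ι → ℤ, y ≠ 0 →
      (Fintype.card ι : ℝ) / 2 < ‖A.toContinuousLinearMap.adjoint (intVec y)‖)
    (u : EuclideanSpace ℝ ι) : ∃ x : ι → ℤ, ‖A.symm (intVec x - u)‖ < 1 := by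
  by_contra! hcon
  set n : ℝ := ((Fintype.card ι : ℕ) : ℝ) with hn
  have hn2 : 2 ≤ n := by rw [hn]; exact_mod_cast hι
  obtain ⟨κ, hκ, hP⟩ := exists_hasSum_poisson_gaussian A
  set q : (ι → ℤ) → ℝ := fun y => ‖A.toContinuousLinearMap.adjoint (intVec y)‖ ^ 2 with hq
  have hκs : ∀ {s : ℝ}, 0 < s → 0 < κ * (1 / s) ^ (n / 2) := fun hs => by positivity
  let S : ℝ → EuclideanSpace ℝ ι → ℝ := fun s u =>
    ∑' x : ι → ℤ, Real.exp (-(Real.pi * s) * ‖A.symm (intVec x + u)‖ ^ 2)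
  let G : ℝ → EuclideanSpace ℝ ι → ℝ := fun s u =>
    ∑' y : ι → ℤ, Real.exp (-(Real.pi / s) * q y) * Real.cos (2 * Real.pi * ⟪intVec y, u⟫_ℝ)
  have hSsum : ∀ {s : ℝ}, 0 < s → ∀ u, Summable fun x : ι → ℤ =>
      Real.exp (-(Real.pi * s) * ‖A.symm (intVec x + u)‖ ^ 2) := fun hs u =>
    summable_gaussian A.symm (by positivity) u
  have hGsum : ∀ {s : ℝ}, 0 < s → ∀ u, Summable fun y : ι → ℤ =>
      Real.exp (-(Real.pi / s) * q y) * Real.cos (2 * Real.pi * ⟪intVec y, u⟫_ℝ) := fun hs u =>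
    (summable_mul_left_iff (hκs hs).ne').1 (hP _ hs u).summable
  have hSG : ∀ {s : ℝ}, 0 < s → ∀ u, S s u = κ * (1 / s) ^ (n / 2) * G s u := fun hs u => by
    rw [← tsum_mul_left]; exact (hP _ hs u).tsum_eq.symm
  have hG0 : ∀ s, G s 0 = ∑' y : ι → ℤ, Real.exp (-(Real.pi / s) * q y) := fun s => by
    simp [G]
  have hG0sum : ∀ {s : ℝ}, 0 < s → Summable fun y : ι → ℤ =>
      Real.exp (-(Real.pi / s) * q y) := fun hs => by simpa using hGsum hs 0
  have hGle : ∀ {s : ℝ}, 0 < s → ∀ u, G s u ≤ G s 0 := fun hs u => by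
    rw [hG0]
    refine (hGsum hs u).tsum_le_tsum (fun y => ?_) (hG0sum hs)
    exact mul_le_of_le_one_right (Real.exp_pos _).le (Real.cos_le_one _)
  have hGmono : ∀ {s s' : ℝ}, 0 < s' → s' ≤ s → G s' 0 ≤ G s 0 := fun {s s'} hs' hss => by
    have hs := hs'.trans_le hss
    rw [hG0, hG0]
    refine (hG0sum hs').tsum_le_tsum (fun y => ?_) (hG0sum hs)
    rw [Real.exp_le_exp, neg_mul, neg_mul, neg_le_neg_iff]
    have : 0 ≤ q y := by positivity
    gcongr
  have hSmono : ∀ {s s' : ℝ}, 0 < s' → s' ≤ s → S s 0 ≤ S s' 0 := fun {s s'} hs' hss => by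
    refine (hSsum (hs'.trans_le hss) 0).tsum_le_tsum (fun y => ?_) (hSsum hs' 0)
    rw [Real.exp_le_exp, neg_mul, neg_mul, neg_le_neg_iff]
    gcongr
  -- the primal tail estimate
  have hprimal : ∀ {s s' : ℝ}, 0 < s' → s' ≤ s →
      G s (-u) ≤ Real.exp (-(Real.pi * (s - s'))) * (s / s') ^ (n / 2) * G s 0 := by
    intro s s' hs' hss
    have hs := hs'.trans_le hss
    have h1 : S s (-u) ≤ Real.exp (-(Real.pi * (s - s'))) * S s' (-u) := by
      rw [← tsum_mul_left]
      refine (hSsum hs _).tsum_le_tsum (fun x => ?_) ((hSsum hs' _).mul_left _)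
      rw [← Real.exp_add, Real.exp_le_exp, ← sub_eq_add_neg]
      have h2 : 1 ≤ ‖A.symm (intVec x - u)‖ ^ 2 := one_le_pow₀ (hcon x)
      have h3 : 0 ≤ Real.pi * (s - s') := mul_nonneg Real.pi_pos.le (by linarith)
      nlinarith
    have h2 : (s / s') ^ (n / 2) * (1 / s) ^ (n / 2) = (1 / s') ^ (n / 2) := by
      rw [← Real.mul_rpow (by positivity) (by positivity)]
      congr 1
      field_simp
    have h3 : S s' (-u) ≤ (s / s') ^ (n / 2) * (κ * (1 / s) ^ (n / 2)) * G s 0 := by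
      rw [hSG hs', ← h2]
      have := (hGle hs' (-u)).trans (hGmono hs' hss)
      have h4 : 0 ≤ κ * ((s / s') ^ (n / 2) * (1 / s) ^ (n / 2)) := by positivity
      nlinarith [mul_le_mul_of_nonneg_left this h4]
    have h4 := h1.trans (mul_le_mul_of_nonneg_left h3 (Real.exp_pos _).le)
    rw [hSG hs] at h4
    refine le_of_mul_le_mul_left (h4.trans (le_of_eq ?_)) (hκs hs)
    ring
  -- the dual tail estimate
  have hdual : ∀ {s s' : ℝ}, 0 < s → s ≤ s' → G s 0 - 1 ≤
      Real.exp (-(Real.pi * (n / 2) ^ 2 * (1 / s - 1 / s'))) * (s' / s) ^ (n / 2) * G s 0 := by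
    intro s s' hs hss
    have hs' := hs.trans_le hss
    set K := Real.exp (-(Real.pi * (n / 2) ^ 2 * (1 / s - 1 / s'))) with hK
    have h1 : G s 0 ≤ 1 + K * G s' 0 := by
      classical
      rw [hG0, (hG0sum hs).tsum_eq_add_tsum_ite 0, hG0, ← tsum_mul_left]
      refine add_le_add (by simp [q]) (Summable.tsum_le_tsum (fun y => ?_) ?_
        ((hG0sum hs').mul_left _))
      · split_ifs with hy
        · positivity
        · rw [← Real.exp_add, Real.exp_le_exp]
          have h2 : (n / 2) ^ 2 ≤ q y := by
            have := (hA y hy).le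
            simp only [hq]
            gcongr
          have h3 : 0 ≤ Real.pi * (1 / s - 1 / s') :=
            mul_nonneg Real.pi_pos.le (sub_nonneg.2 (one_div_le_one_div_of_le hs hss))
          have h4 := mul_le_mul_of_nonneg_left h2 h3
          have e : -(Real.pi / s) * q y = -(Real.pi / s') * q y
            - Real.pi * (1 / s - 1 / s') * q y := by ring
          rw [e]
          linarith
      · refine (hG0sum hs).of_nonneg_of_le (fun y => ?_) (fun y => ?_) <;> split_ifs
        · exact le_rfl
        · positivity
        · positivity
        · exact le_rfl
    have h2 : (s' / s) ^ (n / 2) * (1 / s') ^ (n / 2) = (1 / s) ^ (n / 2) := by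
      rw [← Real.mul_rpow (by positivity) (by positivity)]
      congr 1
      field_simp
    have h3 : G s' 0 ≤ (s' / s) ^ (n / 2) * G s 0 := by
      have h4 := hSmono hs hss
      rw [hSG hs, hSG hs', ← h2] at h4
      refine le_of_mul_le_mul_left (h4.trans (le_of_eq ?_)) (hκs hs')
      ring
    have h4 := mul_le_mul_of_nonneg_left h3 (Real.exp_pos _ : 0 < K).le
    linarith
  have hlow : ∀ {s : ℝ}, 0 < s → 2 ≤ G s (-u) + G s 0 := by
    intro s hs
    rw [hG0, ← (hGsum hs _).tsum_add (hG0sum hs)]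
    refine le_trans (le_of_eq ?_) (((hGsum hs _).add (hG0sum hs)).le_tsum 0 fun y _ => ?_)
    · simp [q]; norm_num
    · have := Real.neg_one_le_cos (2 * Real.pi * ⟪intVec y, -u⟫_ℝ)
      nlinarith [Real.exp_pos (-(Real.pi / s) * q y)]
  have hs : 0 < 3 * n / 8 := by positivity
  have h1 := hprimal (s := 3 * n / 8) (s' := 5 * n / 32) (by positivity) (by linarith)
  have h2 := hdual (s := 3 * n / 8) (s' := 3 * n / 2) (by positivity) (by linarith)
  have h3 := hlow hs
  have hC : Real.exp (-(Real.pi * (3 * n / 8 - 5 * n / 32))) *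
      (3 * n / 8 / (5 * n / 32)) ^ (n / 2) ≤ 0.62 := by
    have e1 : Real.exp (-(Real.pi * (3 * n / 8 - 5 * n / 32))) =
        Real.exp (-(Real.pi * (7 / 16))) ^ (n / 2) := by
      rw [← Real.exp_mul]; congr 1; ring
    rw [e1, show 3 * n / 8 / (5 * n / 32) = 12 / 5 by field_simp; norm_num,
      ← Real.mul_rpow (Real.exp_pos _).le (by norm_num)]
    refine le_trans ?_ exp_neg_pi_mul_seven_sixteenths
    refine Real.rpow_le_self_of_le_one (by positivity) ?_ (by linarith)
    linarith [exp_neg_pi_mul_seven_sixteenths]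
  have hD : Real.exp (-(Real.pi * (n / 2) ^ 2 * (1 / (3 * n / 8) - 1 / (3 * n / 2)))) *
      (3 * n / 2 / (3 * n / 8)) ^ (n / 2) ≤ 0.185 := by
    have e1 : Real.exp (-(Real.pi * (n / 2) ^ 2 * (1 / (3 * n / 8) - 1 / (3 * n / 2)))) =
        Real.exp (-Real.pi) ^ (n / 2) := by
      rw [← Real.exp_mul]; congr 1; field_simp; norm_num
    rw [e1, show 3 * n / 2 / (3 * n / 8) = 4 by field_simp; norm_num,
      ← Real.mul_rpow (Real.exp_pos _).le (by norm_num)]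
    refine le_trans ?_ exp_neg_pi_mul_four
    refine Real.rpow_le_self_of_le_one (by positivity) ?_ (by linarith)
    linarith [exp_neg_pi_mul_four]
  have hGpos : 0 < G (3 * n / 8) 0 := by linarith [hGle hs (-u)]
  nlinarith [mul_le_mul_of_nonneg_right hC hGpos.le, mul_le_mul_of_nonneg_right hD hGpos.le]

/-- **Banaszczyk's transference theorem**, in contrapositive form: if all nonzero dual lattice
vectors are longer than `n / 2`, then every point is at distance less than one from the lattice. -/
theorem exists_norm_symm_sub_lt_one
    (A : EuclideanSpace ℝ ι ≃L[ℝ] EuclideanSpace ℝ ι) (hι : 1 ≤ Fintype.card ι)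
    (hA : ∀ y : ι → ℤ, y ≠ 0 →
      (Fintype.card ι : ℝ) / 2 < ‖A.toContinuousLinearMap.adjoint (intVec y)‖)
    (u : EuclideanSpace ℝ ι) : ∃ x : ι → ℤ, ‖A.symm (intVec x - u)‖ < 1 := by
  rcases hι.eq_or_lt with h1 | h2
  swap
  · exact exists_norm_symm_sub_lt_one_of_two_le A h2 hA u
  obtain ⟨i, hi⟩ := Fintype.card_eq_one_iff.1 h1.symm
  have : Unique ι := ⟨⟨i⟩, hi⟩
  have hnorm : ∀ v w : EuclideanSpace ℝ ι, ‖v‖ * ‖w‖ = |⟪v, w⟫_ℝ| := by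
    intro v w
    simp [EuclideanSpace.norm_eq, PiLp.inner_apply, Real.sqrt_sq_eq_abs, abs_mul, mul_comm]
  have h2 := hA 1 (by simp)
  rw [← h1] at h2
  refine ⟨fun _ => round (u default), ?_⟩
  have h3 := hnorm (A.toContinuousLinearMap.adjoint (intVec 1))
    (A.symm (intVec (fun _ => round (u default)) - u))
  rw [ContinuousLinearMap.adjoint_inner_left] at h3
  have h4 := abs_sub_round (u default)
  rw [abs_sub_comm] at h4
  simp [inner_intVec] at h3
  have h5 : |((round (u default) : ℤ) : ℝ) - u default| =
    |(intVec (fun _ : ι => round (u default)) : EuclideanSpace ℝ ι) default - u default| := rfl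
  push_cast at h2
  by_contra! h6
  rw [map_sub] at h6
  nlinarith

end Transference

section JohnEllipsoid

open Filter Topology Module
open scoped InnerProductSpace

variable {E : Type*} [NormedAddCommGroup E] [InnerProductSpace ℝ E]

/-- The self-map scaling by `α` along the unit vector `e` and by `β` orthogonally to it. -/
noncomputable def axialScaling (e : E) (α β : ℝ) : E →L[ℝ] E :=
  β • ContinuousLinearMap.id ℝ E + (α - β) • (innerSL ℝ e).smulRight e

lemma axialScaling_apply (e : E) (α β : ℝ) (v : E) :
    axialScaling e α β v = β • v + ((α - β) * ⟪e, v⟫_ℝ) • e := by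
  simp [axialScaling, mul_smul]

variable [FiniteDimensional ℝ E]

lemma det_axialScaling {e : E} (he : ‖e‖ = 1) (α : ℝ) {β : ℝ} (hβ : β ≠ 0) :
    (axialScaling e α β).det * β = β ^ finrank ℝ E * α := by
  have h : (axialScaling e α β : E →ₗ[ℝ] E) =
      β • LinearMap.transvection (innerSL ℝ e : E →ₗ[ℝ] ℝ) (((α - β) / β) • e) := by
    ext v
    simp only [ContinuousLinearMap.coe_coe, axialScaling_apply, LinearMap.smul_apply,
      LinearMap.transvection.apply, innerSL_apply_apply, smul_add, smul_smul]
    congr 2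
    field_simp
  rw [ContinuousLinearMap.det, h, LinearMap.det_smul, LinearMap.transvection.det]
  simp [he]
  field_simp
  ring

/-- A closed convex set containing the unit ball and a point `R • e` outside it contains an
ellipsoid elongated towards that point. -/
lemma axialScaling_add_mem {K : Set E} (hK : Convex ℝ K) (hKc : IsClosed K)
    (hball : ∀ v : E, ‖v‖ ≤ 1 → v ∈ K) {e : E} (he : ‖e‖ = 1) {R h β : ℝ} (hR : 1 < R)
    (hRe : R • e ∈ K) (h0 : 0 ≤ h) (h1 : h ≤ 1) (hβ : β ^ 2 = 1 - 2 * h / (R - 1))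
    {v : E} (hv : ‖v‖ ≤ 1) : axialScaling e (1 + h) β v + h • e ∈ K := by
  by_contra hmem
  obtain ⟨f, u, hfu, huf⟩ := geometric_hahn_banach_closed_point hK hKc hmem
  set w : E := (InnerProductSpace.toDual ℝ E).symm f with hw
  have hfw : ∀ z, f z = ⟪w, z⟫_ℝ := fun z => by simp [hw]
  set s := ⟪w, e⟫_ℝ with hs
  have hwu : ‖w‖ ≤ u := by
    by_cases hw0 : w = 0
    · have := hfu 0 (hball 0 (by simp))
      simp [hw0] at this ⊢
      exact this.le
    · have hn : ‖w‖ ≠ 0 := norm_ne_zero_iff.2 hw0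
      have := hfu (‖w‖⁻¹ • w) (hball _ (by rw [norm_smul]; simp [hn]))
      rw [hfw, inner_smul_right, real_inner_self_eq_norm_sq] at this
      field_simp at this
      exact this.le
  have hRs : R * s ≤ u := by
    have := hfu _ hRe
    rw [hfw, inner_smul_right] at this
    exact this.le
  have hsw : |s| ≤ ‖w‖ := by
    have := abs_real_inner_le_norm w e
    rwa [he, mul_one] at this
  have hsu : -u ≤ s := by linarith [neg_abs_le s]
  have hu0 : 0 ≤ u := (norm_nonneg w).trans hwu
  have hDw : ‖axialScaling e (1 + h) β w‖ ^ 2 =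
      β ^ 2 * (‖w‖ ^ 2 - s ^ 2) + (1 + h) ^ 2 * s ^ 2 := by
    rw [axialScaling_apply, norm_add_sq_real, norm_smul, norm_smul, inner_smul_left,
      inner_smul_right, real_inner_comm w e, ← hs, he]
    simp only [Real.norm_eq_abs, mul_pow, sq_abs, conj_trivial]
    ring
  have hle : ‖axialScaling e (1 + h) β w‖ ≤ u - h * s := by
    refine abs_le_of_sq_le_sq' ?_ ?_ |>.2
    · rw [hDw]
      have hwu2 : ‖w‖ ^ 2 ≤ u ^ 2 := by gcongr
      have e1 : (u - h * s) ^ 2 - (β ^ 2 * (u ^ 2 - s ^ 2) + (1 + h) ^ 2 * s ^ 2) =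
          (u + s) * (2 * h / (R - 1)) * (u - R * s) := by
        rw [hβ]
        have : R - 1 ≠ 0 := by linarith
        field_simp
        ring
      have e2 : 0 ≤ (u + s) * (2 * h / (R - 1)) * (u - R * s) := by
        have : 0 < R - 1 := by linarith
        refine mul_nonneg (mul_nonneg (by linarith) (by positivity)) (by linarith)
      nlinarith [mul_le_mul_of_nonneg_left hwu2 (sq_nonneg β)]
    · rcases le_total s 0 with h2 | h2 <;> nlinarith
  have hinner : f (axialScaling e (1 + h) β v + h • e) =
      ⟪axialScaling e (1 + h) β w, v⟫_ℝ + h * s := by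
    rw [hfw, axialScaling_apply, axialScaling_apply, inner_add_right, inner_add_right,
      inner_add_left, inner_smul_right, inner_smul_right, inner_smul_right, inner_smul_left,
      inner_smul_left, real_inner_comm w e, ← hs]
    simp only [conj_trivial]
    ring
  have h3 : ⟪axialScaling e (1 + h) β w, v⟫_ℝ ≤ u - h * s :=
    (real_inner_le_norm _ _).trans
      ((mul_le_of_le_one_right (norm_nonneg _) hv).trans hle)
  linarith

/-- **John's theorem**: a convex body contains an ellipsoid whose dilation by the dimension, about
its centre, covers the body. -/
theorem exists_john_ellipsoid {K : Set E} (hK : Convex ℝ K) (hKc : IsCompact K)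
    (hint : (interior K).Nonempty) (hn : 1 ≤ finrank ℝ E) :
    ∃ (A : E ≃L[ℝ] E) (c : E), (∀ v, ‖v‖ ≤ 1 → A v + c ∈ K) ∧
      ∀ x ∈ K, ‖A.symm (x - c)‖ ≤ finrank ℝ E := by
  let S : Set ((E →L[ℝ] E) × E) := {p | ∀ v, ‖v‖ ≤ 1 → p.1 v + p.2 ∈ K}
  have hSclosed : IsClosed S := by
    have : S = ⋂ (v : E) (_ : ‖v‖ ≤ 1), (fun p : (E →L[ℝ] E) × E => p.1 v + p.2) ⁻¹' K := by
      ext p; simp [S]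
    rw [this]
    refine isClosed_iInter fun v => isClosed_iInter fun _ => hKc.isClosed.preimage ?_
    fun_prop
  obtain ⟨M, hM⟩ := hKc.isBounded.exists_norm_le
  have hSbdd : Bornology.IsBounded S := by
    refine (Metric.isBounded_closedBall (x := (0 : (E →L[ℝ] E) × E))
      (r := max (2 * M) M)).subset fun p hp => ?_
    have hc : ‖p.2‖ ≤ M := by simpa using hM _ (hp 0 (by simp))
    have hM0 : 0 ≤ M := (norm_nonneg _).trans hc
    rw [mem_closedBall_zero_iff, Prod.norm_def]
    refine max_le_max ?_ hc
    refine ContinuousLinearMap.opNorm_le_of_unit_norm (by positivity) fun v hv => ?_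
    have h1 := hM _ (hp v hv.le)
    have h2 := norm_sub_le (p.1 v + p.2) p.2
    rw [add_sub_cancel_right] at h2
    linarith
  have hScomp : IsCompact S := Metric.isCompact_of_isClosed_isBounded hSclosed hSbdd
  obtain ⟨c₀, hc₀⟩ := hint
  obtain ⟨r, hr, hrK⟩ := Metric.isOpen_iff.1 isOpen_interior c₀ hc₀
  have hp₀ : ((r / 2) • ContinuousLinearMap.id ℝ E, c₀) ∈ S := by
    intro v hv
    refine interior_subset (hrK ?_)
    rw [Metric.mem_ball, dist_eq_norm]
    simp only [smul_apply, ContinuousLinearMap.id_apply, add_sub_cancel_right,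
      norm_smul, Real.norm_of_nonneg (by positivity : 0 ≤ r / 2)]
    nlinarith
  obtain ⟨⟨A, c⟩, hAS, hmax⟩ := hScomp.exists_isMaxOn ⟨_, hp₀⟩
    (f := fun p => |p.1.det|) (by
      exact (continuous_abs.comp (ContinuousLinearMap.continuous_det.comp
        continuous_fst)).continuousOn)
  have hdet : A.det ≠ 0 := by
    have h1 := hmax hp₀
    simp only [Set.mem_ofPred_eq] at h1
    have h2 : ((r / 2) • ContinuousLinearMap.id ℝ E).det = (r / 2) ^ finrank ℝ E := by
      rw [ContinuousLinearMap.det, ContinuousLinearMap.toLinearMap_smul, LinearMap.det_smul]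
      simp
    rw [h2, abs_of_pos (by positivity)] at h1
    exact abs_pos.1 (lt_of_lt_of_le (by positivity) h1)
  let Ae : E ≃L[ℝ] E := A.toContinuousLinearEquivOfDetNeZero hdet
  have hAe : ∀ v, Ae v = A v := fun v => rfl
  refine ⟨Ae, c, hAS, fun x hx => ?_⟩
  by_contra! hlt
  set n := finrank ℝ E with hnn
  set R := ‖Ae.symm (x - c)‖ with hR
  have hn' : (1 : ℝ) ≤ n := by exact_mod_cast hn
  have hR1 : 1 < R := by linarith
  set e := R⁻¹ • Ae.symm (x - c) with he
  have hen : ‖e‖ = 1 := by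
    rw [he, norm_smul, norm_inv, Real.norm_of_nonneg (by positivity), ← hR]
    field_simp
  let K' : Set E := {v | A v + c ∈ K}
  have hK' : Convex ℝ K' := by
    have := (hK.translate_preimage_left c).linear_preimage (A : E →ₗ[ℝ] E)
    exact this
  have hK'c : IsClosed K' := hKc.isClosed.preimage (by fun_prop)
  have hRe : R • e ∈ K' := by
    have : R • e = Ae.symm (x - c) := by
      rw [he, smul_smul, mul_inv_cancel₀ (by positivity), one_smul]
    simp only [K', Set.mem_ofPred_eq, this, ← hAe, ContinuousLinearEquiv.apply_symm_apply]
    simpa using hx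
  set δ := 2 * (n - 1) / (R - 1) with hδ
  have hR1' : 0 < R - 1 := by linarith
  have hδ0 : 0 ≤ δ := div_nonneg (by linarith) hR1'.le
  have hδ2 : δ < 2 := by
    rw [hδ, div_lt_iff₀ hR1']
    linarith
  set h := min ((2 - δ) / 12) ((R - 1) / 4) with hh
  have hpos : 0 < h := lt_min (by linarith) (by linarith)
  have hh1 : h ≤ (2 - δ) / 12 := min_le_left _ _
  have hh2 : h ≤ (R - 1) / 4 := min_le_right _ _
  set γ := 2 * h / (R - 1) with hγ
  have hγ1 : γ ≤ 1 / 2 := by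
    rw [hγ, div_le_iff₀ hR1']
    linarith
  have hγ0 : 0 ≤ γ := by positivity
  set β := √(1 - γ) with hβ
  have hβ2 : β ^ 2 = 1 - γ := Real.sq_sqrt (by linarith)
  have hβ0 : 0 < β := Real.sqrt_pos.2 (by linarith)
  have hmem : (A.comp (axialScaling e (1 + h) β), A (h • e) + c) ∈ S := by
    intro v hv
    have := axialScaling_add_mem hK' hK'c hAS hen hR1 hRe hpos.le (by linarith) hβ2 hv
    simpa [K', add_assoc] using this
  have h1 := hmax hmem
  simp only [Set.mem_ofPred_eq] at h1
  have h2 : (A.comp (axialScaling e (1 + h) β)).det = A.det * (axialScaling e (1 + h) β).det :=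
    LinearMap.det_comp _ _
  rw [h2, abs_mul] at h1
  have h3 : |(axialScaling e (1 + h) β).det| ≤ 1 :=
    (mul_le_iff_le_one_right (abs_pos.2 hdet)).1 h1
  have h4 := det_axialScaling hen (1 + h) hβ0.ne'
  have h5 : (axialScaling e (1 + h) β).det = β ^ (n - 1) * (1 + h) := by
    refine mul_right_cancel₀ hβ0.ne' (h4.trans ?_)
    obtain ⟨m, hm⟩ := Nat.exists_eq_add_of_le' hn
    rw [← hnn, hm, Nat.add_sub_cancel, pow_succ]
    ring
  rw [h5, abs_of_pos (by positivity)] at h3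
  have h6 : (β ^ (n - 1) * (1 + h)) ^ 2 ≤ 1 := pow_le_one₀ (by positivity) h3
  have h7 : 1 - δ * h ≤ (β ^ 2) ^ (n - 1) := by
    have := one_add_mul_le_pow (by linarith : (-2 : ℝ) ≤ -γ) (n - 1)
    rw [hβ2, sub_eq_add_neg 1 γ]
    refine le_trans (le_of_eq ?_) this
    rw [Nat.cast_sub hn, hδ, hγ]
    push_cast
    ring
  have h8 : (1 - δ * h) * (1 + h) ^ 2 ≤ 1 := by
    refine le_trans (mul_le_mul_of_nonneg_right h7 (sq_nonneg _)) (le_trans (le_of_eq ?_) h6)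
    ring
  have h9 : δ * h ≤ 2 * h := by nlinarith
  nlinarith [mul_pos hpos hpos]

end JohnEllipsoid

section Flatness

open Filter Topology Module Metric
open scoped InnerProductSpace

variable {ι : Type*} [Fintype ι]

lemma one_le_dist_intVec {x y : ι → ℤ} (h : x ≠ y) : 1 ≤ dist (intVec x) (intVec y) := by
  obtain ⟨i, hi⟩ := Function.ne_iff.1 h
  have h1 : (1 : ℝ) ≤ |(x i : ℝ) - y i| := by
    exact_mod_cast Int.one_le_abs (sub_ne_zero.2 hi)
  rw [dist_eq_norm]
  refine h1.trans ?_
  simpa [intVec] using PiLp.norm_apply_le (intVec x - intVec y) i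

lemma isClosed_range_intVec : IsClosed (Set.range (intVec : (ι → ℤ) → EuclideanSpace ℝ ι)) := by
  refine isClosed_of_pairwise_le_dist (ε := 1) one_pos ?_
  rintro _ ⟨x, rfl⟩ _ ⟨y, rfl⟩ h
  exact one_le_dist_intVec fun hxy => h (by rw [hxy])

lemma exists_primitive_smul_eq {y : ι → ℤ} (hy : y ≠ 0) :
    ∃ (g : ℤ) (y' z : ι → ℤ), g ≠ 0 ∧ y = g • y' ∧ ∑ i, y' i * z i = 1 := by
  have hmem : ∀ i, Submodule.IsPrincipal.generator (Ideal.span (Set.range y)) ∣ y i := fun i =>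
    (Submodule.IsPrincipal.mem_iff_generator_dvd _).1 (Ideal.subset_span ⟨i, rfl⟩)
  choose y' hy' using hmem
  have hg := Submodule.IsPrincipal.generator_mem (Ideal.span (Set.range y))
  set g := Submodule.IsPrincipal.generator (Ideal.span (Set.range y))
  obtain ⟨z, hz⟩ := Ideal.mem_span_range_iff_exists_fun.1 hg
  have hg0 : g ≠ 0 := fun h => hy (funext fun i => by simp [hy' i, h])
  refine ⟨g, y', z, hg0, funext fun i => by simp [hy' i], ?_⟩
  refine mul_left_cancel₀ hg0 ?_
  rw [mul_one, Finset.mul_sum]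
  conv_rhs => rw [← hz]
  exact Finset.sum_congr rfl fun i _ => by rw [hy' i]; ring

/-- A convex body on which no nonzero integral functional has small width has integral points
close to every point, measured by its John ellipsoid. -/
lemma exists_intVec_sub_mem {K : Set (EuclideanSpace ℝ ι)} (hK : Convex ℝ K) (hKc : IsCompact K)
    (hint : (interior K).Nonempty) (hι : 1 ≤ Fintype.card ι)
    (hwidth : ∀ y : ι → ℤ, y ≠ 0 → ∀ m : ℝ,
      ∃ x ∈ K, ⟪intVec y, x⟫_ℝ ∉ Set.Icc m (m + (Fintype.card ι : ℝ) ^ 2))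
    (u : EuclideanSpace ℝ ι) : ∃ x : ι → ℤ, intVec x - u ∈ interior K := by
  obtain ⟨A, c, hA, hAK⟩ := exists_john_ellipsoid hK hKc hint (by simpa using hι)
  rw [finrank_euclideanSpace] at hAK
  obtain ⟨x, hx⟩ := exists_norm_symm_sub_lt_one A hι (fun y hy => by
    by_contra! hle
    obtain ⟨x, hx, hxy⟩ := hwidth y hy (⟪intVec y, c⟫_ℝ - (Fintype.card ι : ℝ) ^ 2 / 2)
    refine hxy ?_
    have h1 : ⟪intVec y, x⟫_ℝ - ⟪intVec y, c⟫_ℝ =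
        ⟪A.toContinuousLinearMap.adjoint (intVec y), A.symm (x - c)⟫_ℝ := by
      rw [ContinuousLinearMap.adjoint_inner_left, ← inner_sub_right]
      simp
    have h2 : |⟪intVec y, x⟫_ℝ - ⟪intVec y, c⟫_ℝ| ≤
        (Fintype.card ι : ℝ) / 2 * Fintype.card ι := by
      rw [h1]
      refine (abs_real_inner_le_norm _ _).trans ?_
      exact mul_le_mul hle (hAK x hx) (norm_nonneg _) (by positivity)
    rw [abs_le] at h2
    constructor <;> nlinarith) (u + c)
  refine ⟨x, mem_interior.2 ⟨(fun z => A.symm (z - c)) ⁻¹' ball 0 1, fun z hz => ?_, ?_, ?_⟩⟩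
  · have := hA (A.symm (z - c)) (by simpa using (mem_ball_zero_iff.1 hz).le)
    simpa using this
  · exact isOpen_ball.preimage (by fun_prop)
  · simpa [sub_sub] using hx

/-- A **flatness theorem** with the bound `n ^ 2`. -/
theorem exists_primitive_width_le {K : Set (EuclideanSpace ℝ ι)} (hK : Convex ℝ K)
    (hKc : IsCompact K) (hι : 1 ≤ Fintype.card ι) (hfree : ∀ x : ι → ℤ, intVec x ∉ interior K) :
    ∃ y z : ι → ℤ, ∑ i, y i * z i = 1 ∧
      ∃ m : ℝ, ∀ x ∈ K, ⟪intVec y, x⟫_ℝ ∈ Set.Icc m (m + (Fintype.card ι : ℝ) ^ 2) := by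
  by_contra! hcon
  have hwidth : ∀ y : ι → ℤ, y ≠ 0 → ∀ m : ℝ,
      ∃ x ∈ K, ⟪intVec y, x⟫_ℝ ∉ Set.Icc m (m + (Fintype.card ι : ℝ) ^ 2) := by
    intro y hy m
    by_contra! hm
    obtain ⟨g, y', z, hg, rfl, hz⟩ := exists_primitive_smul_eq hy
    have hsmul : ∀ x, ⟪intVec (g • y'), x⟫_ℝ = g * ⟪intVec y', x⟫_ℝ := fun x => by
      simp [inner_intVec, Finset.mul_sum, mul_assoc]
    have hg1 : (1 : ℝ) ≤ |(g : ℝ)| := by exact_mod_cast Int.one_le_abs hg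
    have hbdd : ∀ x ∈ K, ∀ x' ∈ K,
        ⟪intVec y', x⟫_ℝ - ⟪intVec y', x'⟫_ℝ ≤ (Fintype.card ι : ℝ) ^ 2 := by
      intro x hx x' hx'
      have h1 := hm x hx
      have h2 := hm x' hx'
      rw [hsmul, Set.mem_Icc] at h1 h2
      have h3 : |(g : ℝ)| * |⟪intVec y', x⟫_ℝ - ⟪intVec y', x'⟫_ℝ| ≤ (Fintype.card ι : ℝ) ^ 2 := by
        rw [← abs_mul, abs_le]
        constructor <;> linarith
      exact (le_abs_self _).trans ((le_mul_of_one_le_left (abs_nonneg _) hg1).trans h3)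
    obtain ⟨x₁, hx₁, -⟩ := hcon y' z hz 0
    obtain ⟨x₀, hx₀, hmin⟩ := hKc.exists_isMinOn ⟨x₁, hx₁⟩
      (f := fun x => ⟪intVec y', x⟫_ℝ) (by fun_prop)
    obtain ⟨x, hx, hxn⟩ := hcon y' z hz ⟪intVec y', x₀⟫_ℝ
    exact hxn ⟨hmin hx, by linarith [hbdd x hx x₀ hx₀]⟩
  have hne : K.Nonempty := by
    obtain ⟨i⟩ : Nonempty ι := Fintype.card_pos_iff.1 hι
    obtain ⟨x, hx, -⟩ := hwidth (fun _ => 1) (fun h => one_ne_zero (congrFun h i)) 0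
    exact ⟨x, hx⟩
  rcases (interior K).eq_empty_or_nonempty with hempty | hint
  · have hcover : ⋃ x : ι → ℤ, (fun u => intVec x - u) ⁻¹' K = Set.univ := by
      refine Set.eq_univ_of_forall fun u => ?_
      by_contra hu
      simp only [Set.mem_iUnion, Set.mem_preimage, not_exists] at hu
      have hcl : IsClosed ((fun v => v + u) ⁻¹' Set.range (intVec : (ι → ℤ) → _)) :=
        isClosed_range_intVec.preimage (by fun_prop)
      have hdis : Disjoint K ((fun v => v + u) ⁻¹' Set.range (intVec : (ι → ℤ) → _)) := by
        rw [Set.disjoint_left]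
        rintro v hv ⟨x, hx⟩
        exact hu x (by rwa [hx, add_sub_cancel_right])
      obtain ⟨δ, hδ, hdis'⟩ := hdis.exists_cthickenings hKc hcl
      obtain ⟨x, hx⟩ := exists_intVec_sub_mem (hK.cthickening δ) hKc.cthickening
        (hne.mono fun v hv => interior_maximal (thickening_subset_cthickening δ K)
          isOpen_thickening (self_subset_thickening hδ K hv)) hι
        (fun y hy m => by
          obtain ⟨x, hx, h⟩ := hwidth y hy m
          exact ⟨x, self_subset_cthickening K hx, h⟩) u
      exact Set.disjoint_left.1 hdis' (interior_subset hx)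
        (self_subset_cthickening _ ⟨x, by simp⟩)
    obtain ⟨x, v, hv⟩ := nonempty_interior_of_iUnion_of_closed
      (fun x => hKc.isClosed.preimage (by fun_prop)) hcover
    have h : intVec x - v ∈ interior K := by
      have := preimage_interior_subset_interior_preimage
        (f := fun u => intVec x - u) (t := (fun u => intVec x - u) ⁻¹' K) (by fun_prop)
        (show intVec x - v ∈ (fun u => intVec x - u) ⁻¹'
          interior ((fun u => intVec x - u) ⁻¹' K) by simpa using hv)
      simpa [Set.preimage] using this
    simp [hempty] at h
  · obtain ⟨x, hx⟩ := exists_intVec_sub_mem hK hKc hint hι hwidth 0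
    exact hfree x (by simpa using hx)

end Flatness

section LatticeQuotient

open Module

lemma mem_intPts_iff {d : ℕ} {x : Fin d → ℝ} :
    x ∈ intPts d ↔ ∃ n : Fin d → ℤ, x = fun i => (n i : ℝ) := by
  refine ⟨fun h => ?_, ?_⟩
  · choose n hn using h
    exact ⟨n, funext hn⟩
  · rintro ⟨n, rfl⟩ i
    exact ⟨n i, rfl⟩

lemma map_intCast_mulVec {m n : ℕ} (M : Matrix (Fin m) (Fin n) ℤ) (x : Fin n → ℤ) :
    (M.map (Int.castRingHom ℝ)).mulVec (fun i => (x i : ℝ)) = fun i => ((M.mulVec x) i : ℝ) := by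
  ext i
  exact (RingHom.map_mulVec (Int.castRingHom ℝ) M x i).symm

lemma mulVec_map_intCast_mem_intPts {m n : ℕ} (M : Matrix (Fin m) (Fin n) ℤ) {x : Fin n → ℝ}
    (hx : x ∈ intPts n) : (M.map (Int.castRingHom ℝ)).mulVec x ∈ intPts m := by
  obtain ⟨x, rfl⟩ := mem_intPts_iff.1 hx
  exact mem_intPts_iff.2 ⟨_, map_intCast_mulVec M x⟩

/-- The quotient of `ℝ^d` by a rational subspace is split over the integers. -/
lemma exists_split_lattice_quotient {d : ℕ} {G : Set (Fin d → ℝ)} (hG : G ⊆ intPts d) :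
    ∃ (r : ℕ) (π : (Fin d → ℝ) →ₗ[ℝ] (Fin r → ℝ)) (σ : (Fin r → ℝ) →ₗ[ℝ] (Fin d → ℝ)),
      LinearMap.ker π = Submodule.span ℝ G ∧ (∀ x, π (σ x) = x) ∧
      (∀ x ∈ intPts d, π x ∈ intPts r) ∧ (∀ x ∈ intPts r, σ x ∈ intPts d) := by
  let c : (Fin d → ℤ) →ₗ[ℤ] (Fin d → ℝ) := (Int.castAddHom ℝ).toIntLinearMap.compLeft (Fin d)
  have hc : ∀ x, c x = fun i => (x i : ℝ) := fun x => rfl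
  let K := ((Submodule.span ℝ G).restrictScalars ℤ).comap c
  have hK : ∀ x, x ∈ K ↔ (fun i => (x i : ℝ)) ∈ Submodule.span ℝ G := fun x => Iff.rfl
  have : IsTorsionFree ℤ ((Fin d → ℤ) ⧸ K) := by
    refine .of_smul_eq_zero fun n q hq => ?_
    obtain ⟨x, rfl⟩ := K.mkQ_surjective q
    refine or_iff_not_imp_left.2 fun hn => ?_
    rw [← map_smul, Submodule.mkQ_apply, Submodule.Quotient.mk_eq_zero, hK] at hq
    rw [Submodule.mkQ_apply, Submodule.Quotient.mk_eq_zero, hK]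
    have h1 := Submodule.smul_mem _ ((n : ℝ)⁻¹) hq
    convert h1 using 1
    ext i
    have : (n : ℝ) ≠ 0 := by exact_mod_cast hn
    simp [this]
  let b := finBasis ℤ ((Fin d → ℤ) ⧸ K)
  let p : (Fin d → ℤ) →ₗ[ℤ] (Fin (finrank ℤ ((Fin d → ℤ) ⧸ K)) → ℤ) :=
    b.equivFun.toLinearMap ∘ₗ K.mkQ
  have hp : ∀ x, p x = 0 ↔ x ∈ K := fun x => by simp [p]
  obtain ⟨s, hs⟩ := projective_lifting_property p LinearMap.id
    (b.equivFun.surjective.comp K.mkQ_surjective)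
  have hmul : LinearMap.toMatrix' p * LinearMap.toMatrix' s = 1 := by
    rw [← LinearMap.toMatrix'_comp, hs, LinearMap.toMatrix'_id]
  set P := (LinearMap.toMatrix' p).map (Int.castRingHom ℝ) with hP
  set Q := (LinearMap.toMatrix' s).map (Int.castRingHom ℝ) with hQ
  have hPQ : P * Q = 1 := by
    rw [hP, hQ, ← Matrix.map_mul, hmul]
    simp
  have hPc : ∀ x : Fin d → ℤ, P.mulVec (fun i => (x i : ℝ)) = fun i => (p x i : ℝ) := fun x => by
    rw [hP, map_intCast_mulVec, LinearMap.toMatrix'_mulVec]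
  have hQc : ∀ x, Q.mulVec (fun i => (x i : ℝ)) = fun i => (s x i : ℝ) := fun x => by
    rw [hQ, map_intCast_mulVec, LinearMap.toMatrix'_mulVec]
  refine ⟨_, P.mulVecLin, Q.mulVecLin, le_antisymm ?_ ?_, fun x => ?_,
    fun x hx => mulVec_map_intCast_mem_intPts _ hx, fun x hx => mulVec_map_intCast_mem_intPts _ hx⟩
  · have hres : ∀ x, x - Q.mulVec (P.mulVec x) ∈ Submodule.span ℝ G := by
      intro x
      have hsum := LinearMap.pi_apply_eq_sum_univ
        (LinearMap.id - Q.mulVecLin ∘ₗ P.mulVecLin) x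
      simp only [LinearMap.sub_apply, LinearMap.id_apply, LinearMap.comp_apply,
        Matrix.mulVecLin_apply] at hsum
      rw [hsum]
      refine Submodule.sum_smul_mem _ _ fun i _ => ?_
      have hk : Pi.single i 1 - s (p (Pi.single i 1)) ∈ K := by
        rw [← hp, map_sub, ← LinearMap.comp_apply p s, hs, LinearMap.id_apply, sub_self]
      have hi : (fun j => if i = j then (1 : ℝ) else 0) =
          fun j => (((Pi.single i 1 : Fin d → ℤ) j : ℤ) : ℝ) := by
        ext j
        simp [Pi.single_apply, eq_comm]
      rw [hi, hPc, hQc]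
      convert (hK _).1 hk using 1
      ext j
      simp
    intro x hx
    have := hres x
    rw [LinearMap.mem_ker, Matrix.mulVecLin_apply] at hx
    simpa [hx] using this
  · refine Submodule.span_le.2 fun g hg => ?_
    obtain ⟨x, rfl⟩ := mem_intPts_iff.1 (hG hg)
    have : p x = 0 := (hp x).2 ((hK x).2 (Submodule.subset_span hg))
    rw [SetLike.mem_coe, LinearMap.mem_ker, Matrix.mulVecLin_apply, hPc, this]
    ext
    simp
  · simp [Matrix.mulVec_mulVec, hPQ]

end LatticeQuotient

section Lifting

open Module Filter Topology

lemma mem_coneHull_iff {V : Type*} [AddCommGroup V] [Module ℝ V] {s : Set V} {x : V} :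
    x ∈ coneHull s ↔ x ∈ Submodule.span NNReal s := by
  rw [Submodule.mem_span_set']
  constructor
  · rintro ⟨n, c, v, hc, hv, rfl⟩
    exact ⟨n, fun i => ⟨c i, hc i⟩, fun i => ⟨v i, hv i⟩, rfl⟩
  · rintro ⟨n, c, v, rfl⟩
    exact ⟨n, fun i => c i, fun i => v i, fun i => (c i).2, fun i => (v i).2, rfl⟩

lemma smul_mem_coneHull {V : Type*} [AddCommGroup V] [Module ℝ V] {s : Set V} {x : V}
    (hx : x ∈ coneHull s) {a : ℝ} (ha : 0 ≤ a) : a • x ∈ coneHull s := by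
  rw [mem_coneHull_iff] at *
  exact Submodule.smul_mem _ (⟨a, ha⟩ : NNReal) hx

lemma convex_coneHull {V : Type*} [AddCommGroup V] [Module ℝ V] (s : Set V) :
    Convex ℝ (coneHull s) := by
  intro x hx y hy a b ha hb _
  have h1 := smul_mem_coneHull hx ha
  have h2 := smul_mem_coneHull hy hb
  rw [mem_coneHull_iff] at *
  exact add_mem h1 h2

lemma span_coneHull {V : Type*} [AddCommGroup V] [Module ℝ V] (s : Set V) :
    Submodule.span ℝ (coneHull s) = Submodule.span ℝ s := by
  refine le_antisymm (Submodule.span_le.2 ?_) (Submodule.span_mono fun x hx => ?_)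
  · rintro _ ⟨n, c, v, -, hv, rfl⟩
    exact Submodule.sum_smul_mem _ _ fun i _ => Submodule.subset_span (hv i)
  · exact mem_coneHull_iff.2 (Submodule.subset_span hx)

lemma eventually_add_smul_sum_mem_coneHull {V : Type*} [AddCommGroup V] [Module ℝ V]
    (G : Finset V) {x : V} (hx : x ∈ Submodule.span ℝ (G : Set V)) :
    ∀ᶠ k : ℕ in atTop, x + (k : ℝ) • ∑ g ∈ G, g ∈ coneHull (G : Set V) := by
  obtain ⟨f, -, rfl⟩ := Submodule.mem_span_finset.1 hx
  have h : ∀ᶠ k : ℕ in atTop, ∀ g ∈ G, -f g ≤ (k : ℝ) :=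
    (eventually_all_finset G).2 fun g _ =>
      tendsto_natCast_atTop_atTop.eventually (eventually_ge_atTop (-f g))
  filter_upwards [h] with k hk
  rw [Finset.smul_sum, ← Finset.sum_add_distrib, mem_coneHull_iff]
  refine sum_mem fun g hg => mem_coneHull_iff.1 ?_
  rw [← add_smul]
  exact smul_mem_coneHull (mem_coneHull_iff.2 (Submodule.subset_span hg)) (by linarith [hk g hg])

/-- A lattice point in the interior of the projection of `C` along a rational cone lifts to a
lattice point in the interior of the sum of `C` and that cone. -/
lemma exists_mem_intPts_interior_add_coneHull {d r : ℕ} {G : Finset (Fin d → ℝ)}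
    (hG : (G : Set (Fin d → ℝ)) ⊆ intPts d) {C : Set (Fin d → ℝ)} (hC : Convex ℝ C)
    (π : (Fin d → ℝ) →ₗ[ℝ] (Fin r → ℝ))
    (hker : LinearMap.ker π = Submodule.span ℝ (G : Set (Fin d → ℝ)))
    {x : Fin d → ℝ} (hx : x ∈ intPts d) (hxC : π x ∈ interior (π '' C)) :
    ∃ z ∈ intPts d, z ∈ interior (C + coneHull (G : Set (Fin d → ℝ))) := by
  have hcont : Continuous π := π.continuous_of_finiteDimensional
  obtain ⟨b, hxb, hb⟩ := exists_mem_interior_convexHull_affineBasis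
    (hcont.continuousAt.preimage_mem_nhds (mem_interior_iff_mem_nhds.1 hxC))
  have hev : ∀ᶠ k : ℕ in atTop, ∀ i,
      b i + (k : ℝ) • ∑ g ∈ G, g ∈ C + coneHull (G : Set (Fin d → ℝ)) := by
    refine eventually_all.2 fun i => ?_
    obtain ⟨p, hp, hpb⟩ := hb (subset_convexHull ℝ _ ⟨i, rfl⟩)
    have h : b i - p ∈ Submodule.span ℝ (G : Set (Fin d → ℝ)) := by
      rw [← hker, LinearMap.mem_ker, map_sub, hpb, sub_self]
    filter_upwards [eventually_add_smul_sum_mem_coneHull G h] with k hk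
    exact Set.mem_add.2 ⟨p, hp, _, hk, by abel⟩
  obtain ⟨k, hk⟩ := hev.exists
  refine ⟨x + (k : ℝ) • ∑ g ∈ G, g, fun i => ?_, ?_⟩
  · obtain ⟨n, rfl⟩ := mem_intPts_iff.1 hx
    have hsum : ∀ g ∈ G, ∃ m : ℤ, g i = m := fun g hg => hG hg i
    choose! m hm using hsum
    refine ⟨n i + k * ∑ g ∈ G, m g, ?_⟩
    simp [Finset.sum_congr rfl hm]
  · have hsub : convexHull ℝ (Set.range b) ⊆
        (fun z => z + (k : ℝ) • ∑ g ∈ G, g) ⁻¹' (C + coneHull (G : Set (Fin d → ℝ))) := by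
      refine convexHull_min (Set.range_subset_iff.2 hk) ?_
      exact (hC.add (convex_coneHull _)).translate_preimage_left _
    refine mem_interior.2 ⟨(fun z => z - (k : ℝ) • ∑ g ∈ G, g) ⁻¹'
      interior (convexHull ℝ (Set.range b)), fun z hz => ?_,
      isOpen_interior.preimage (by fun_prop), by simpa using hxb⟩
    simpa using hsub (interior_subset hz)

end Lifting

/-- Let `N` be a lattice of rank `d` (modelled as `ℤ^d ⊆ ℝ^d`) and `U = conv(F) + σ₀`,
where `F` is finite and `σ₀` is the convex cone generated by a finite set `G` of lattice
points. Let `l = d - dim(σ₀ - σ₀) ≥ 1`, let `t > 0`, and suppose `N ∩ int(tU) = ∅`.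
Then there exists a surjective `ℤ`-linear map `φ : N → ℤ` (modelled by its realification,
integer-valued on lattice points and surjective onto `ℤ`) such that `φ_ℝ(U)` is a bounded
interval of length at most `l²/t`. -/
theorem stmt_6 (d : ℕ) (F G : Finset (Fin d → ℝ))
    (hG : (G : Set (Fin d → ℝ)) ⊆ intPts d)
    (U : Set (Fin d → ℝ))
    (hU : U = {x | ∃ p ∈ convexHull ℝ (F : Set (Fin d → ℝ)),
      ∃ s ∈ coneHull (G : Set (Fin d → ℝ)), x = p + s})
    (l : ℕ)
    (hl : l = d - Module.finrank ℝ
      (Submodule.span ℝ (coneHull (G : Set (Fin d → ℝ)))))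
    (hl1 : 1 ≤ l)
    (t : ℝ) (ht : 0 < t)
    (hdisj : intPts d ∩ interior (t • U) = ∅) :
    ∃ φ : (Fin d → ℝ) →ₗ[ℝ] ℝ,
      (∀ x ∈ intPts d, ∃ n : ℤ, φ x = (n : ℝ)) ∧
      (∀ n : ℤ, ∃ x ∈ intPts d, φ x = (n : ℝ)) ∧
      ∃ m M : ℝ, (∀ u ∈ U, φ u ∈ Set.Icc m M) ∧ M - m ≤ (l : ℝ) ^ 2 / t := by
  obtain ⟨r, π, σ, hker, hπσ, hπ, hσ⟩ := exists_split_lattice_quotient hG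
  have hlr : l = r := by
    have h := π.finrank_range_add_finrank_ker
    rw [LinearMap.range_eq_top.2 fun x => ⟨σ x, hπσ x⟩, hker, finrank_top] at h
    simp only [Module.finrank_fin_fun] at h
    rw [hl, span_coneHull]
    omega
  subst hlr
  have hU' : U = convexHull ℝ (F : Set (Fin d → ℝ)) + coneHull (G : Set (Fin d → ℝ)) := by
    rw [hU]
    ext x
    simp [Set.mem_add, eq_comm]
  have hC : Convex ℝ (t • convexHull ℝ (F : Set (Fin d → ℝ))) := (convex_convexHull ℝ _).smul t
  have hCc : IsCompact (t • convexHull ℝ (F : Set (Fin d → ℝ))) :=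
    (F.finite_toSet.isCompact_convexHull (𝕜 := ℝ)).smul t
  set C := t • convexHull ℝ (F : Set (Fin d → ℝ)) with hCdef
  have hCU : C + coneHull (G : Set (Fin d → ℝ)) ⊆ t • U := by
    rintro _ ⟨_, ⟨p, hp, rfl⟩, s, hs, rfl⟩
    refine ⟨p + t⁻¹ • s, ?_, by simp [ht.ne']⟩
    rw [hU']
    exact Set.add_mem_add hp (smul_mem_coneHull hs (by positivity))
  let e := EuclideanSpace.equiv (Fin l) ℝ
  have hKconv : Convex ℝ (e ⁻¹' (π '' C)) := (hC.linear_image π).linear_preimage e.toLinearMap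
  have hKcomp : IsCompact (e ⁻¹' (π '' C)) :=
    e.toHomeomorph.isCompact_preimage.2 (hCc.image π.continuous_of_finiteDimensional)
  obtain ⟨y, z, hyz, m, hm⟩ := exists_primitive_width_le hKconv hKcomp (by simpa using hl1)
    (fun x hx => by
      have hx' : (fun i => (x i : ℝ)) ∈ interior (π '' C) := by
        have := e.toHomeomorph.preimage_interior (π '' C) ▸ hx
        exact this
      have hxi : (fun i => (x i : ℝ)) ∈ intPts l := mem_intPts_iff.2 ⟨x, rfl⟩
      obtain ⟨v, hv, hvC⟩ := exists_mem_intPts_interior_add_coneHull hG hC π hker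
        (hσ _ hxi) (by rwa [hπσ])
      exact Set.eq_empty_iff_forall_notMem.1 hdisj v ⟨hv, interior_mono hCU hvC⟩)
  let φ : (Fin d → ℝ) →ₗ[ℝ] ℝ := ∑ i, (y i : ℝ) • (LinearMap.proj i ∘ₗ π)
  have hφ : ∀ x, φ x = ∑ i, (y i : ℝ) * π x i := fun x => by simp [φ]
  refine ⟨φ, fun x hx => ?_, fun n => ?_, m / t, (m + (l : ℝ) ^ 2) / t, fun u hu => ?_, ?_⟩
  · obtain ⟨q, hq⟩ := mem_intPts_iff.1 (hπ x hx)
    exact ⟨∑ i, y i * q i, by simp [hφ, hq]⟩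
  · refine ⟨σ fun i => ((n * z i : ℤ) : ℝ), hσ _ (mem_intPts_iff.2 ⟨_, rfl⟩), ?_⟩
    rw [hφ, hπσ]
    have : ∑ i, y i * (n * z i) = n := by
      rw [Finset.sum_congr rfl fun i _ => mul_left_comm (y i) n (z i), ← Finset.mul_sum, hyz,
        mul_one]
    exact_mod_cast this
  · rw [hU'] at hu
    obtain ⟨p, hp, s, hs, rfl⟩ := hu
    have hs0 : π s = 0 := by
      rw [← LinearMap.mem_ker, hker, ← span_coneHull]
      exact Submodule.subset_span hs
    have h := hm (e.symm (π (t • p))) ⟨t • p, ⟨p, hp, rfl⟩, (e.apply_symm_apply _).symm⟩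
    have hval : inner ℝ (intVec y) (e.symm (π (t • p))) = t * φ (p + s) := by
      rw [inner_intVec, hφ, map_add, hs0, add_zero, Finset.mul_sum]
      refine Finset.sum_congr rfl fun i _ => ?_
      simp [e]
      ring
    rw [hval, Fintype.card_fin] at h
    constructor
    · rw [div_le_iff₀ ht]
      linarith [h.1]
    · rw [le_div_iff₀ ht]
      linarith [h.2]
  · rw [← sub_div, add_sub_cancel_left]
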